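/- Let Q = 2N+2 and let Ω ⊆ ℍᴺ be an open set satisfying the measure density condition: there exists C₁ > 0 such that |B(ξ,r) ∩ Ω| ≥ C₁ r^Q for all ξ ∈ Ω and all r ∈ (0,1]. Then the Lebesgue measure of the set Ω̄ ∖ Ω (the closure of Ω minus Ω) is zero. -/

import Mathlib

open MeasureTheory Real Filter
open scoped ENNReal Topology

noncomputable section

/-- Points of the Heisenberg group `ℍᴺ = ℝᴺ × ℝᴺ × ℝ`. -/
abbrev H (N : ℕ) := (Fin N → ℝ) × (Fin N → ℝ) × ℝ

namespace Heis

/-- Heisenberg group multiplication. -/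
def hmul {N : ℕ} (a b : H N) : H N :=
  (a.1 + b.1, a.2.1 + b.2.1,
    a.2.2 + b.2.2 + 2 * (∑ i, b.1 i * a.2.1 i) - 2 * (∑ i, a.1 i * b.2.1 i))

/-- Heisenberg group inverse. -/
def hinv {N : ℕ} (a : H N) : H N := (-a.1, -a.2.1, -a.2.2)

/-- The homogeneous norm `|ξ| = (|z|⁴ + s²)^{1/4}`. -/
def hnorm {N : ℕ} (a : H N) : ℝ :=
  (((∑ i, (a.1 i)^2) + (∑ i, (a.2.1 i)^2))^2 + (a.2.2)^2) ^ ((4:ℝ)⁻¹)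

/-- `hdist a b = |a⁻¹ ∘ b|`. -/
def hdist {N : ℕ} (a b : H N) : ℝ := hnorm (hmul (hinv a) b)

/-- The ball `B(c,r) = {ξ : |c⁻¹∘ξ| < r}`. -/
def ball {N : ℕ} (c : H N) (r : ℝ) : Set (H N) := {x | hdist c x < r}

/-- Homogeneous dimension `Q = 2N+2` as a real number. -/
def QQ (N : ℕ) : ℝ := 2*N + 2

lemma hmul_hinv_cancel {N : ℕ} (a b : H N) : hmul a (hmul (hinv a) b) = b := by
  refine Prod.ext ?_ (Prod.ext ?_ ?_)
  · simp [hmul, hinv]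
  · simp [hmul, hinv]
  · simp only [hmul, hinv, Pi.add_apply, Pi.neg_apply, add_mul, mul_add, Finset.sum_add_distrib,
      neg_mul, mul_neg, Finset.sum_neg_distrib]
    ring

lemma hinv_hmul_cancel {N : ℕ} (a b : H N) : hmul (hinv a) (hmul a b) = b := by
  refine Prod.ext ?_ (Prod.ext ?_ ?_)
  · simp [hmul, hinv]
  · simp [hmul, hinv]
  · simp only [hmul, hinv, Pi.add_apply, Pi.neg_apply, add_mul, mul_add, Finset.sum_add_distrib,
      neg_mul, mul_neg, Finset.sum_neg_distrib]
    ring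

lemma hmul_zero {N : ℕ} (a : H N) : hmul a 0 = a := by
  simp [hmul]

lemma continuous_hmul {N : ℕ} : Continuous (fun p : H N × H N => hmul p.1 p.2) := by
  unfold hmul
  fun_prop

lemma continuous_hnorm {N : ℕ} : Continuous (hnorm : H N → ℝ) := by
  unfold hnorm
  refine Continuous.rpow_const (by fun_prop) ?_
  intro x
  right
  norm_num

lemma continuous_hmul_left {N : ℕ} (a : H N) : Continuous (fun b : H N => hmul a b) :=
  continuous_hmul.comp (by fun_prop : Continuous fun b : H N => (a, b))

lemma continuous_hmul_right {N : ℕ} (a : H N) : Continuous (fun b : H N => hmul b a) :=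
  continuous_hmul.comp (by fun_prop : Continuous fun b : H N => (b, a))

lemma isOpen_ball {N : ℕ} (c : H N) (r : ℝ) : IsOpen (ball c r) := by
  have : Continuous (fun x : H N => hdist c x) :=
    continuous_hnorm.comp (continuous_hmul_left _)
  exact isOpen_lt this continuous_const

/-- Shears preserve Lebesgue measure. -/
lemma mp_shear {N : ℕ} (a b : Fin N → ℝ) (φ : (Fin N → ℝ) → (Fin N → ℝ) → ℝ)
    (hφ : Measurable (fun p : (Fin N → ℝ) × (Fin N → ℝ) => φ p.1 p.2)) :
    MeasurePreserving (fun p : H N => ((p.1 + a, p.2.1 + b, p.2.2 + φ p.1 p.2.1) : H N))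
      volume volume := by
  have h1 : ∀ x, MeasurePreserving
      (fun q : (Fin N → ℝ) × ℝ => (q.1 + b, q.2 + φ x q.1)) volume volume := by
    intro x
    have hm : Measurable (fun y => φ x y) := hφ.comp (by fun_prop : Measurable fun y => (x, y))
    refine MeasurePreserving.skew_product (g := fun y t => t + φ x y)
      (measurePreserving_add_right volume b) (by fun_prop) ?_
    exact Eventually.of_forall fun y => (measurePreserving_add_right volume (φ x y)).map_eq
  refine MeasurePreserving.skew_product
    (g := fun x (q : (Fin N → ℝ) × ℝ) => (q.1 + b, q.2 + φ x q.1))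
    (measurePreserving_add_right volume a) ?_ ?_
  · have : Measurable (fun p : H N => φ p.1 p.2.1) :=
      hφ.comp (by fun_prop : Measurable fun p : H N => (p.1, p.2.1))
    show Measurable (fun p : H N => (p.2.1 + b, p.2.2 + φ p.1 p.2.1))
    fun_prop
  · exact Eventually.of_forall fun x => (h1 x).map_eq

lemma mp_left {N : ℕ} (a : H N) : MeasurePreserving (fun b : H N => hmul a b) volume volume := by
  convert mp_shear a.1 a.2.1
    (fun x y => a.2.2 + 2 * (∑ i, x i * a.2.1 i) - 2 * (∑ i, a.1 i * y i)) (by fun_prop) using 1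
  funext b
  refine Prod.ext ?_ (Prod.ext ?_ ?_) <;> simp only [hmul] <;> first | exact add_comm _ _ | ring

lemma mp_right {N : ℕ} (a : H N) : MeasurePreserving (fun b : H N => hmul b a) volume volume := by
  convert mp_shear a.1 a.2.1
    (fun x y => a.2.2 + 2 * (∑ i, a.1 i * y i) - 2 * (∑ i, x i * a.2.1 i)) (by fun_prop) using 1
  funext b
  refine Prod.ext ?_ (Prod.ext ?_ ?_) <;> simp only [hmul]
  ring

/-- Homogeneous boxes. -/
def box (N : ℕ) (r : ℝ) : Set (H N) :=
  Metric.closedBall 0 r ×ˢ (Metric.closedBall 0 r ×ˢ Metric.closedBall 0 (r ^ 2))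

lemma isCompact_box (N : ℕ) (r : ℝ) : IsCompact (box N r) :=
  (isCompact_closedBall _ _).prod ((isCompact_closedBall _ _).prod (isCompact_closedBall _ _))

lemma box_mem_nhds {N : ℕ} {r R : ℝ} (hr : 0 ≤ r) (hR : r < R) {h : H N} (hh : h ∈ box N r) :
    box N R ∈ 𝓝 h := by
  obtain ⟨h1, h2, h3⟩ := hh
  have hsq : r ^ 2 < R ^ 2 := by nlinarith
  refine prod_mem_nhds ?_ (prod_mem_nhds ?_ ?_)
  · exact Filter.mem_of_superset (Metric.isOpen_ball.mem_nhds
      (Metric.closedBall_subset_ball hR h1)) Metric.ball_subset_closedBall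
  · exact Filter.mem_of_superset (Metric.isOpen_ball.mem_nhds
      (Metric.closedBall_subset_ball hR h2)) Metric.ball_subset_closedBall
  · exact Filter.mem_of_superset (Metric.isOpen_ball.mem_nhds
      (Metric.closedBall_subset_ball hsq h3)) Metric.ball_subset_closedBall

lemma volume_box (N : ℕ) {r : ℝ} (hr : 0 < r) :
    volume (box N (2 * r)) = ENNReal.ofReal ((4 ^ N * 4 ^ N * 8) * r ^ QQ N) := by
  have hq : r ^ QQ N = r ^ N * r ^ N * r ^ 2 := by
    have : QQ N = ((N + N + 2 : ℕ) : ℝ) := by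
      unfold QQ
      push_cast
      ring
    rw [this, Real.rpow_natCast, pow_add, pow_add]
  unfold box
  rw [Measure.volume_eq_prod, Measure.prod_prod, Measure.volume_eq_prod, Measure.prod_prod,
    Real.volume_pi_closedBall _ (by positivity), Real.volume_closedBall,
    ← ENNReal.ofReal_mul (by positivity), ← ENNReal.ofReal_mul (by positivity), hq]
  congr 1
  simp only [Fintype.card_fin, mul_pow]
  have : (4 : ℝ) ^ N = 2 ^ N * 2 ^ N := by rw [← mul_pow]; norm_num
  rw [this]
  ring

lemma mem_box_of_hnorm_lt {N : ℕ} {r : ℝ} (hr : 0 < r) {k : H N} (hk : hnorm k < r) :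
    k ∈ box N r := by
  have hA : 0 ≤ ∑ i, (k.1 i) ^ 2 := Finset.sum_nonneg fun i _ => sq_nonneg _
  have hB : 0 ≤ ∑ i, (k.2.1 i) ^ 2 := Finset.sum_nonneg fun i _ => sq_nonneg _
  have h4 : ((∑ i, (k.1 i)^2) + (∑ i, (k.2.1 i)^2))^2 + (k.2.2)^2 < (r ^ 2) ^ 2 := by
    unfold hnorm at hk
    rw [Real.rpow_inv_lt_iff_of_pos (by positivity) hr.le (by norm_num)] at hk
    calc _ < r ^ (4 : ℝ) := hk
      _ = _ := by
        rw [show (4 : ℝ) = ((4 : ℕ) : ℝ) by norm_num, Real.rpow_natCast]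
        ring
  have hs : |k.2.2| ≤ r ^ 2 := abs_le_of_sq_le_sq (by nlinarith [sq_nonneg ((∑ i, (k.1 i)^2) + (∑ i, (k.2.1 i)^2))]) (by positivity)
  have hAB : (∑ i, (k.1 i)^2) + (∑ i, (k.2.1 i)^2) ≤ r ^ 2 :=
    (abs_le_of_sq_le_sq (by nlinarith [sq_nonneg k.2.2]) (by positivity)).trans' (le_abs_self _)
  refine ⟨?_, ?_, ?_⟩
  · rw [mem_closedBall_zero_iff, pi_norm_le_iff_of_nonneg hr.le]
    intro i
    have := Finset.single_le_sum (f := fun i => (k.1 i) ^ 2) (fun i _ => sq_nonneg _)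
      (Finset.mem_univ i)
    exact abs_le_of_sq_le_sq (by linarith) hr.le
  · rw [mem_closedBall_zero_iff, pi_norm_le_iff_of_nonneg hr.le]
    intro i
    have := Finset.single_le_sum (f := fun i => (k.2.1 i) ^ 2) (fun i _ => sq_nonneg _)
      (Finset.mem_univ i)
    exact abs_le_of_sq_le_sq (by linarith) hr.le
  · rw [mem_closedBall_zero_iff]
    exact hs

/-- Density at closure points, in left-translated form. -/
lemma density_closure {N : ℕ} {Ω : Set (H N)} (hΩ : IsOpen Ω) {r : ℝ} (hr : 0 < r) {c : ℝ≥0∞}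
    (hd : ∀ ξ ∈ Ω, c ≤ volume (ball ξ r ∩ Ω)) {ξ : H N} (hξ : ξ ∈ closure Ω) :
    c ≤ volume {h : H N | h ∈ box N (2 * r) ∧ hmul ξ h ∈ Ω} := by
  have hev : ∀ᶠ ξ' in 𝓝 ξ, ∀ h ∈ box N r, hmul (hinv ξ) (hmul ξ' h) ∈ box N (2 * r) := by
    refine (isCompact_box N r).eventually_forall_of_forall_eventually ?_
    intro h hh
    have hcont : Continuous (fun p : H N × H N => hmul (hinv ξ) (hmul p.1 p.2)) :=
      (continuous_hmul_left _).comp continuous_hmul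
    apply hcont.continuousAt.eventually_mem
    simp only [hinv_hmul_cancel]
    exact box_mem_nhds hr.le (by linarith) hh
  obtain ⟨ξ', hξ', hΩ'⟩ := (mem_closure_iff_frequently.1 hξ).and_eventually hev |>.exists
  refine (hd ξ' hξ').trans ?_
  rw [← (mp_left ξ).measure_preimage ((isOpen_ball ξ' r).inter hΩ).measurableSet.nullMeasurableSet]
  refine measure_mono ?_
  rintro h ⟨hb, hO⟩
  refine ⟨?_, hO⟩
  have := hΩ' _ (mem_box_of_hnorm_lt hr hb)
  rwa [hmul_hinv_cancel, hinv_hmul_cancel] at this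

lemma exists_box_subset {N : ℕ} {V : Set (H N)} (hV : V ∈ 𝓝 (0 : H N)) :
    ∃ r : ℝ, 0 < r ∧ r ≤ 1 ∧ box N (2 * r) ⊆ V := by
  obtain ⟨δ, hδ, hsub⟩ := Metric.nhds_basis_closedBall.mem_iff.1 hV
  refine ⟨min (1 / 2) (δ / 2), by positivity, (min_le_left _ _).trans (by norm_num), ?_⟩
  set r := min (1 / 2 : ℝ) (δ / 2)
  have hr : 0 < r := by positivity
  have h1 : r ≤ 1 / 2 := min_le_left _ _
  have h2 : r ≤ δ / 2 := min_le_right _ _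
  refine Set.Subset.trans ?_ hsub
  rintro ⟨x, y, s⟩ ⟨hx, hy, hs⟩
  simp only [mem_closedBall_zero_iff] at hx hy hs ⊢
  refine norm_prod_le_iff.2 ⟨by simp; linarith, norm_prod_le_iff.2 ⟨by simp; linarith, ?_⟩⟩
  have : ‖s‖ ≤ δ := by nlinarith
  simpa using this

/-- measure density implies the boundary is null. -/
theorem measure_density_closure_null (N : ℕ) (hN : 1 ≤ N) (Ω : Set (H N))
    (hΩopen : IsOpen Ω)
    (hdens : ∃ C₁ : ℝ, 0 < C₁ ∧ ∀ ξ ∈ Ω, ∀ r : ℝ, 0 < r → r ≤ 1 →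
      ENNReal.ofReal (C₁ * r ^ QQ N) ≤ volume (ball ξ r ∩ Ω)) :
    volume (closure Ω \ Ω) = 0 := by
  classical
  obtain ⟨C₁, hC, hd⟩ := hdens
  by_contra hne
  have hEclosed : IsClosed (closure Ω \ Ω) := isClosed_closure.sdiff hΩopen
  have hK : ∃ K ⊆ closure Ω \ Ω, IsCompact K ∧ 0 < volume K := by
    by_contra! hcon
    apply hne
    have hcov : closure Ω \ Ω = ⋃ n : ℕ, (closure Ω \ Ω) ∩ Metric.closedBall 0 (n : ℝ) := by
      rw [← Set.inter_iUnion, Metric.iUnion_closedBall_nat, Set.inter_univ]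
    rw [hcov]
    refine measure_iUnion_null fun n => ?_
    exact le_antisymm (hcon _ Set.inter_subset_left
      ((isCompact_closedBall _ _).inter_left hEclosed)) zero_le
  obtain ⟨K, hKE, hKc, hKpos⟩ := hK
  have hKtop : volume K ≠ ∞ := hKc.measure_lt_top.ne
  have hKmeas : MeasurableSet K := hKc.measurableSet
  set v := (volume K).toReal with hv
  have hvpos : 0 < v := ENNReal.toReal_pos hKpos.ne' hKtop
  have hKv : volume K = ENNReal.ofReal v := (ENNReal.ofReal_toReal hKtop).symm
  set M : ℝ := 4 ^ N * 4 ^ N * 8 with hM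
  have hMpos : 0 < M := by positivity
  set e : ℝ := C₁ * v / (2 * M) with he
  have hepos : 0 < e := by positivity
  obtain ⟨U, hKU, hUo, -, hUK⟩ := hKmeas.exists_isOpen_diff_lt hKtop
    (ENNReal.ofReal_pos.2 hepos).ne'
  have hev : ∀ᶠ h in 𝓝 (0 : H N), ∀ ξ ∈ K, hmul ξ h ∈ U := by
    refine hKc.eventually_forall_of_forall_eventually ?_
    intro ξ hξ
    have hcont : Continuous (fun p : H N × H N => hmul p.2 p.1) :=
      continuous_hmul.comp continuous_swap
    apply hcont.continuousAt.eventually_mem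
    simp only [hmul_zero]
    exact hUo.mem_nhds (hKU hξ)
  obtain ⟨r, hr, hr1, hbox⟩ := exists_box_subset hev
  have hboxm : MeasurableSet (box N (2 * r)) := (isCompact_box N _).measurableSet
  set S : Set (H N × H N) := {p | p.1 ∈ K ∧ p.2 ∈ box N (2 * r) ∧ hmul p.1 p.2 ∈ Ω} with hS
  have hSm : MeasurableSet S :=
    (measurable_fst hKmeas).inter ((measurable_snd hboxm).inter
      (hΩopen.preimage continuous_hmul).measurableSet)
  have hlow : ENNReal.ofReal (C₁ * r ^ QQ N) * volume K ≤
      ((volume : Measure (H N)).prod (volume : Measure (H N))) S := by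
    rw [Measure.prod_apply hSm, ← setLIntegral_const, ← lintegral_indicator hKmeas]
    refine lintegral_mono fun ξ => ?_
    by_cases hξ : ξ ∈ K
    · rw [Set.indicator_of_mem hξ]
      refine (density_closure hΩopen hr (fun ξ hξ => hd ξ hξ r hr hr1) (hKE hξ).1).trans ?_
      exact measure_mono fun h hh => ⟨hξ, hh⟩
    · rw [Set.indicator_of_notMem hξ]
      exact zero_le
  have hup : ((volume : Measure (H N)).prod (volume : Measure (H N))) S ≤
      ENNReal.ofReal e * volume (box N (2 * r)) := by
    rw [Measure.prod_apply_symm hSm, ← setLIntegral_const, ← lintegral_indicator hboxm]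
    refine lintegral_mono fun h => ?_
    by_cases hh : h ∈ box N (2 * r)
    · rw [Set.indicator_of_mem hh]
      refine le_trans ?_ hUK.le
      rw [← (mp_right h).measure_preimage
        (hUo.measurableSet.diff hKmeas).nullMeasurableSet]
      refine measure_mono ?_
      rintro ξ ⟨hξ, -, hO⟩
      exact ⟨hbox hh ξ hξ, fun hk => (hKE hk).2 hO⟩
    · rw [Set.indicator_of_notMem hh]
      refine le_of_eq ?_
      convert measure_empty (μ := (volume : Measure (H N)))
      ext ξ
      simp [hS, hh]
  have hfin := hlow.trans hup
  have hrQ : 0 < r ^ QQ N := Real.rpow_pos_of_pos hr _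
  rw [volume_box N hr, hKv, ← ENNReal.ofReal_mul (by positivity),
    ← ENNReal.ofReal_mul hepos.le, ENNReal.ofReal_le_ofReal_iff (by positivity)] at hfin
  have : e * (M * r ^ QQ N) = C₁ * r ^ QQ N * v / 2 := by
    rw [he]
    field_simp
  rw [← hM, this] at hfin
  have : 0 < C₁ * r ^ QQ N * v := by positivity
  linarith

end Heis
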